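/- Fix a positive integer k. Then, as h → 0 with ε = ε(h) → 0 and ε(h)/√h → ∞, one has E( W_h^{2k}·1_{|σW_h + J_h| ≤ ε} ) = (2k−1)!!·h^k + O(h²·ε^{2k−Y−2}) + o(h^{k+1/Y}) + O(h^{1/2}·ε^{2k−1}·e^{−ε²/(2σ²h)}), where (2k−1)!! denotes the double factorial and the remainder decomposes as a sum of functions with the indicated big-O/little-o rates. -/

import Mathlib

open MeasureTheory ProbabilityTheory Filter Asymptotics Set
open scoped Topology NNReal ENNReal Real

noncomputable section

/-- The Lévy density `s(x) = (C₊·1_{x>0} + C₋·1_{x<0})·q(x)·|x|^{−1−Y}`. -/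
def levyDensity (Y Cp Cm : ℝ) (q : ℝ → ℝ) (x : ℝ) : ℝ :=
  (if 0 < x then Cp else if x < 0 then Cm else 0) * q x * |x| ^ (-1 - Y)

/-- The Lévy measure `ν(dx) = s(x) dx`. -/
def levyMeasure (Y Cp Cm : ℝ) (q : ℝ → ℝ) : Measure ℝ :=
  volume.withDensity fun x => ENNReal.ofReal (levyDensity Y Cp Cm q x)

/-- The Lévy exponent `ψ_J(u) = ibu + ∫ (e^{iux} − 1 − iux·1_{|x|≤1}) ν(dx)`. -/
def psiJ (b Y Cp Cm : ℝ) (q : ℝ → ℝ) (u : ℝ) : ℂ :=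
  Complex.I * b * u +
    ∫ x : ℝ,
      (Complex.exp (Complex.I * u * x) - 1 - (if |x| ≤ 1 then Complex.I * u * x else 0))
      ∂(levyMeasure Y Cp Cm q)

/-- The scale parameter `ς = ((C₊+C₋)Γ(−Y)|cos(πY/2)|)^{1/Y}`. -/
def varsigma (Y Cp Cm : ℝ) : ℝ :=
  ((Cp + Cm) * Real.Gamma (-Y) * |Real.cos (π * Y / 2)|) ^ (1 / Y)

/-- The stable part of the Lévy exponent:
`ς^Y |u|^Y (1 − iβ·sgn(u)·tan(πY/2))` with `β = (C₊−C₋)/(C₊+C₋)`. -/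
def stablePart (Y Cp Cm : ℝ) (u : ℝ) : ℂ :=
  (varsigma Y Cp Cm ^ Y * |u| ^ Y : ℝ) *
    (1 - Complex.I * ((Cp - Cm) / (Cp + Cm)) * Real.sign u * Real.tan (π * Y / 2))

/-- Characteristic function of `X̃_h`, the time-`h` marginal of a Brownian motion with
variance `σ²` plus an independent strictly `Y`-stable process. -/
def tildeCF (σ Y Cp Cm : ℝ) (h u : ℝ) : ℂ :=
  Complex.exp (-(σ ^ 2 * u ^ 2 * h / 2) - h * stablePart Y Cp Cm u)

/-!
Dividing by `√h`, with `L = ε/√h → ∞` and `X = J_h/√h`, what is missing from the full moment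
`(2k−1)!! h^k` is the integral of `W^{2k}` over `{|σW + X| > L}`. There, either `|X| > L/2`, or
`|X| > L⁻¹` and `|W| > L/(2σ)`, or `|W| > (L − L⁻¹)/σ`. The exponent `ψ_J` grows at most like
`|u|^Y`, so `P(|J_h| > r) = O(h r^{−Y})`; by independence the first case contributes
`O(h^{k+1} ε^{−Y})`, and so does the second, because the event `|W| > L/(2σ)` gains any power
of `L`. In the third case the Gaussian tail keeps its exact exponent, since lowering the threshold
by `L⁻¹` changes `L²/(2σ²)` only by `O(1)`.
-/

lemma exists_isBigO_isBigO_of_isBigO_add {α E F : Type*} [SeminormedAddCommGroup E]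
    [SeminormedAddCommGroup F] {l : Filter α} {f : α → E} {g₁ g₂ : α → F}
    (hf : f =O[l] fun x => g₁ x + g₂ x) :
    ∃ f₁ f₂ : α → E, f = f₁ + f₂ ∧ f₁ =O[l] g₁ ∧ f₂ =O[l] g₂ := by
  obtain ⟨C, hC, hfC⟩ := hf.exists_nonneg
  set S : Set α := {x | ‖g₂ x‖ ≤ ‖g₁ x‖}
  refine ⟨S.indicator f, Sᶜ.indicator f, (S.indicator_self_add_compl f).symm, ?_, ?_⟩
  · refine IsBigO.of_bound (2 * C) (hfC.bound.mono fun x hx => ?_)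
    by_cases hxS : x ∈ S
    · rw [indicator_of_mem hxS]
      have hxS' : ‖g₂ x‖ ≤ ‖g₁ x‖ := hxS
      nlinarith [norm_add_le (g₁ x) (g₂ x)]
    · rw [indicator_of_notMem hxS, norm_zero]
      positivity
  · refine IsBigO.of_bound (2 * C) (hfC.bound.mono fun x hx => ?_)
    by_cases hxS : x ∈ S
    · rw [indicator_of_notMem (notMem_compl_iff.2 hxS), norm_zero]
      positivity
    · rw [indicator_of_mem (mem_compl hxS)]
      have hxS' : ‖g₁ x‖ < ‖g₂ x‖ := not_le.1 hxS
      nlinarith [norm_add_le (g₁ x) (g₂ x)]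

lemma setIntegral_le_add_of_subset_union {α : Type*} [MeasurableSpace α] {μ : Measure α}
    {f : α → ℝ} {s t u : Set α} (hf : Integrable f μ) (hf0 : 0 ≤ f) (hstu : s ⊆ t ∪ u) :
    ∫ x in s, f x ∂μ ≤ ∫ x in t, f x ∂μ + ∫ x in u, f x ∂μ := by
  rw [← integral_add_measure hf.restrict hf.restrict]
  exact integral_mono_measure
    ((Measure.restrict_mono_set μ hstu).trans (Measure.restrict_union_le t u))
    (Eventually.of_forall hf0) (hf.restrict.add_measure hf.restrict)

lemma setIntegral_abs_pow_lt_abs_le {μ : Measure ℝ} {c : ℝ} (hc : 0 < c) (n p : ℕ)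
    (hint : Integrable (fun x => |x| ^ (n + p)) μ) :
    ∫ x in {x | c < |x|}, |x| ^ n ∂μ ≤ (c ^ p)⁻¹ * ∫ x, |x| ^ (n + p) ∂μ := by
  have hms : MeasurableSet {x : ℝ | c < |x|} := measurableSet_lt measurable_const measurable_norm
  rw [← integral_indicator hms, ← integral_const_mul]
  refine integral_mono_of_nonneg
    (Eventually.of_forall fun x => indicator_nonneg (fun _ _ => by positivity) x)
    (hint.const_mul _) (Eventually.of_forall fun x => ?_)
  refine indicator_apply_le' (fun hx => ?_) fun _ => by positivity
  have hcx : c < |x| := hx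
  calc |x| ^ n ≤ |x| ^ n * ((c ^ p)⁻¹ * |x| ^ p) :=
        le_mul_of_one_le_right (by positivity)
          ((one_le_inv_mul₀ (by positivity)).2 (by gcongr))
    _ = (c ^ p)⁻¹ * |x| ^ (n + p) := by ring

lemma setIntegral_preimage_inter_of_indepFun {Ω 𝓧 𝓨 : Type*} [MeasurableSpace Ω]
    [MeasurableSpace 𝓧] [MeasurableSpace 𝓨] {P : Measure Ω} {W : Ω → 𝓧} {X : Ω → 𝓨}
    (hWX : IndepFun W X P) (hW : Measurable W) (hX : Measurable X)
    {A : Set 𝓨} {B : Set 𝓧} (hA : MeasurableSet A) (hB : MeasurableSet B) {f : 𝓧 → ℝ}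
    (hf : AEStronglyMeasurable f (P.map W)) :
    ∫ ω in X ⁻¹' A ∩ W ⁻¹' B, f (W ω) ∂P = P.real (X ⁻¹' A) * ∫ w in B, f w ∂P.map W := by
  have hind : Indep (MeasurableSpace.comap X inferInstance)
      (MeasurableSpace.comap W inferInstance) P := (hWX.symm)
  rw [← setIntegral_indicator (hW hB), ← integral_indicator hB,
    integral_map hW.aemeasurable (hf.indicator hB),
    ← hind.setIntegral_eq_mul hX.comap_le hW.aemeasurable ⟨A, hA, rfl⟩ (hf.indicator hB)]
  rfl

/-- The weight `(|y|² ∧ |y|)·|y|^{−1−Y}`, which dominates, up to scaling, the integrand of the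
Lévy–Khintchine formula against a density of order `|x|^{−1−Y}`. -/
def stableMajorant (Y y : ℝ) : ℝ :=
  min (|y| ^ 2) |y| * |y| ^ (-1 - Y)

lemma integrable_stableMajorant {Y : ℝ} (hY1 : 1 < Y) (hY2 : Y < 2) :
    Integrable (stableMajorant Y) := by
  suffices h : IntegrableOn (fun y : ℝ => min (y ^ 2) y * y ^ (-1 - Y)) (Ioi 0) by
    have hnorm := integrable_fun_norm_addHaar (volume : Measure ℝ)
      (f := fun y : ℝ => min (y ^ 2) y * y ^ (-1 - Y))
    simp only [Module.finrank_self, Nat.sub_self, pow_zero, one_smul] at hnorm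
    exact hnorm.2 h
  rw [← Ioc_union_Ioi_eq_Ioi zero_le_one]
  refine IntegrableOn.union ?_ ?_
  · have h : IntegrableOn (fun y : ℝ => y ^ (1 - Y)) (Ioc 0 1) :=
      (intervalIntegrable_iff_integrableOn_Ioc_of_le zero_le_one).1
        (intervalIntegral.intervalIntegrable_rpow' (by linarith))
    refine h.congr_fun (fun y hy => ?_) measurableSet_Ioc
    beta_reduce
    rw [min_eq_left (pow_le_of_le_one hy.1.le hy.2 two_ne_zero), ← Real.rpow_natCast,
      ← Real.rpow_add hy.1]
    ring_nf
  · refine (integrableOn_Ioi_rpow_of_lt (a := -Y) (by linarith) one_pos).congr_fun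
      (fun y hy => ?_) measurableSet_Ioi
    have hy1 : 1 < y := hy
    beta_reduce
    rw [min_eq_right (le_self_pow₀ hy1.le two_ne_zero),
      ← Real.rpow_one_add' (by linarith) (by linarith)]
    ring_nf

lemma min_mul_rpow_eq_stableMajorant {U : ℝ} (hU : 0 < U) (Y x : ℝ) :
    min ((U * |x|) ^ 2) (U * |x|) * |x| ^ (-1 - Y) = U ^ (1 + Y) * stableMajorant Y (U * x) := by
  rw [stableMajorant, abs_mul, abs_of_pos hU, Real.mul_rpow hU.le (abs_nonneg x),
    show -1 - Y = -(1 + Y) by ring, Real.rpow_neg hU.le]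
  have : U ^ (1 + Y) ≠ 0 := by positivity
  field_simp

/-- The compensated exponential `e^{iux} − 1 − iux·1_{|x|≤1}` of the Lévy–Khintchine formula. -/
def compensatedExp (u x : ℝ) : ℂ :=
  Complex.exp (Complex.I * u * x) - 1 - (if |x| ≤ 1 then Complex.I * u * x else 0)

lemma norm_compensatedExp_le {U u : ℝ} (hU : 1 ≤ U) (hu : |u| ≤ U) (x : ℝ) :
    ‖compensatedExp u x‖ ≤ 3 * min ((U * |x|) ^ 2) (U * |x|) := by
  set y := U * |x| with hy
  have hy0 : 0 ≤ y := by positivity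
  have hnorm : ‖Complex.I * u * x‖ ≤ y := by
    simp only [norm_mul, Complex.norm_I, one_mul, Complex.norm_real, Real.norm_eq_abs]
    rw [hy]
    gcongr
  have hexp : ‖Complex.exp (Complex.I * u * x) - 1‖ ≤ y := by
    refine le_trans ?_ hnorm
    simpa [mul_assoc] using Real.norm_exp_I_mul_ofReal_sub_one_le (x := u * x)
  unfold compensatedExp
  rcases le_total y 1 with hy1 | hy1
  · have hx : |x| ≤ 1 := (le_mul_of_one_le_left (abs_nonneg x) hU).trans hy1
    rw [if_pos hx, min_eq_left (pow_le_of_le_one hy0 hy1 two_ne_zero)]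
    calc _ ≤ ‖Complex.I * u * x‖ ^ 2 := Complex.norm_exp_sub_one_sub_id_le (hnorm.trans hy1)
      _ ≤ y ^ 2 := by gcongr
      _ ≤ 3 * y ^ 2 := by linarith [sq_nonneg y]
  · rw [min_eq_right (le_self_pow₀ hy1 two_ne_zero)]
    refine (norm_sub_le _ _).trans ?_
    split_ifs
    · linarith
    · rw [norm_zero]
      linarith

lemma norm_integral_smul_compensatedExp_le {Y K : ℝ} (hY1 : 1 < Y) (hY2 : Y < 2) {s : ℝ → ℝ}
    (hs : ∀ x, |s x| ≤ K * |x| ^ (-1 - Y)) (u : ℝ) :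
    ‖∫ x, s x • compensatedExp u x‖ ≤ 3 * K * (∫ y, stableMajorant Y y) * max 1 |u| ^ Y := by
  set U := max 1 |u|
  have hU1 : 1 ≤ U := le_max_left _ _
  have hU0 : 0 < U := one_pos.trans_le hU1
  have hle (x : ℝ) :
      ‖s x • compensatedExp u x‖ ≤ 3 * K * U ^ (1 + Y) * stableMajorant Y (U * x) := by
    calc ‖s x • compensatedExp u x‖
        ≤ (K * |x| ^ (-1 - Y)) * (3 * min ((U * |x|) ^ 2) (U * |x|)) := by
          rw [norm_smul]
          exact mul_le_mul (hs x) (norm_compensatedExp_le hU1 (le_max_right _ _) x)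
            (norm_nonneg _) ((abs_nonneg _).trans (hs x))
      _ = 3 * K * (min ((U * |x|) ^ 2) (U * |x|) * |x| ^ (-1 - Y)) := by ring
      _ = 3 * K * U ^ (1 + Y) * stableMajorant Y (U * x) := by
          rw [min_mul_rpow_eq_stableMajorant hU0, ← mul_assoc]
  calc ‖∫ x, s x • compensatedExp u x‖
      ≤ ∫ x, 3 * K * U ^ (1 + Y) * stableMajorant Y (U * x) :=
        norm_integral_le_of_norm_le
          (((integrable_stableMajorant hY1 hY2).comp_mul_left' hU0.ne').const_mul _)
          (Eventually.of_forall hle)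
    _ = 3 * K * (∫ y, stableMajorant Y y) * U ^ Y := by
        rw [integral_const_mul, Measure.integral_comp_mul_left, abs_of_pos (inv_pos.2 hU0),
          Real.rpow_add hU0, Real.rpow_one, smul_eq_mul]
        field_simp

section LevyDensity

variable {Y Cp Cm : ℝ} {q : ℝ → ℝ}

lemma measurable_levyDensity (hq : Measurable q) : Measurable (levyDensity Y Cp Cm q) := by
  have hconst : Measurable fun x : ℝ => if 0 < x then Cp else if x < 0 then Cm else 0 :=
    measurable_const.ite measurableSet_Ioi (measurable_const.ite measurableSet_Iio measurable_const)
  unfold levyDensity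
  fun_prop

lemma levyDensity_nonneg (hCp : 0 ≤ Cp) (hCm : 0 ≤ Cm) (hq : ∀ x, 0 ≤ q x) (x : ℝ) :
    0 ≤ levyDensity Y Cp Cm q x := by
  have := hq x
  unfold levyDensity
  split_ifs <;> positivity

lemma levyDensity_le {M : ℝ} (hCp : 0 ≤ Cp) (hCm : 0 ≤ Cm) (hq : ∀ x, 0 ≤ q x)
    (hqM : ∀ x, q x ≤ M) (x : ℝ) :
    levyDensity Y Cp Cm q x ≤ (Cp + Cm) * M * |x| ^ (-1 - Y) := by
  have := hq x
  unfold levyDensity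
  gcongr
  · split_ifs <;> linarith
  · exact hqM x

lemma exists_norm_psiJ_le {M : ℝ} (b : ℝ) (hY1 : 1 < Y) (hY2 : Y < 2) (hCp : 0 ≤ Cp)
    (hCm : 0 ≤ Cm) (hq_meas : Measurable q) (hq : ∀ x, 0 ≤ q x) (hqM : ∀ x, q x ≤ M) :
    ∃ C, ∀ u, ‖psiJ b Y Cp Cm q u‖ ≤ C * max 1 |u| ^ Y := by
  have hpsi (u : ℝ) : psiJ b Y Cp Cm q u =
      Complex.I * b * u + ∫ x, levyDensity Y Cp Cm q x • compensatedExp u x := by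
    rw [psiJ, levyMeasure, integral_withDensity_eq_integral_toReal_smul
      (measurable_levyDensity hq_meas).ennreal_ofReal (by simp)]
    simp only [ENNReal.toReal_ofReal (levyDensity_nonneg hCp hCm hq _), compensatedExp]
  have hs (x : ℝ) : |levyDensity Y Cp Cm q x| ≤ (Cp + Cm) * M * |x| ^ (-1 - Y) := by
    rw [abs_of_nonneg (levyDensity_nonneg hCp hCm hq x)]
    exact levyDensity_le hCp hCm hq hqM x
  refine ⟨|b| + 3 * ((Cp + Cm) * M) * ∫ y, stableMajorant Y y, fun u => ?_⟩
  have hdrift : ‖Complex.I * b * u‖ ≤ |b| * max 1 |u| ^ Y := by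
    simp only [norm_mul, Complex.norm_I, one_mul, Complex.norm_real, Real.norm_eq_abs]
    gcongr
    exact (le_max_right _ _).trans (Real.self_le_rpow_of_one_le (le_max_left _ _) hY1.le)
  rw [hpsi, add_mul]
  exact (norm_add_le _ _).trans
    (add_le_add hdrift (norm_integral_smul_compensatedExp_le hY1 hY2 hs u))

end LevyDensity

lemma integral_comp_abs_gaussianReal (f : ℝ → ℝ) :
    ∫ x, f |x| ∂gaussianReal 0 1 =
      2 * (√(2 * π))⁻¹ * ∫ y in Ioi 0, f y * Real.exp (-y ^ 2 / 2) := by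
  rw [integral_gaussianReal_eq_integral_smul one_ne_zero, mul_assoc, ← integral_const_mul,
    ← integral_comp_abs (f := fun y => (√(2 * π))⁻¹ * (f y * Real.exp (-y ^ 2 / 2)))]
  refine integral_congr_ae (Eventually.of_forall fun x => ?_)
  simp only [gaussianPDFReal, NNReal.coe_one, mul_one, sub_zero, smul_eq_mul, sq_abs]
  ring

lemma integral_pow_two_mul_gaussianReal (k : ℕ) :
    ∫ x, x ^ (2 * k) ∂gaussianReal 0 1 = (Nat.doubleFactorial (2 * k - 1) : ℝ) := by
  have hGamma : ∫ y in Ioi (0 : ℝ), y ^ (2 * k) * Real.exp (-y ^ 2 / 2) =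
      2 ^ k * (√2 * (2⁻¹ * Real.Gamma (k + 1 / 2))) := by
    have hrpow := integral_rpow_mul_exp_neg_mul_rpow (p := 2) (q := (2 * k : ℕ)) (b := 2⁻¹)
      two_pos (neg_one_lt_zero.trans_le (Nat.cast_nonneg _)) (by norm_num)
    have hexponent : -(((2 * k : ℕ) : ℝ) + 1) / 2 = -((k : ℝ) + 2⁻¹) := by
      push_cast
      ring
    rw [hexponent, Real.inv_rpow zero_le_two, Real.rpow_neg zero_le_two, inv_inv,
      Real.rpow_add two_pos, Real.rpow_natCast, ← one_div (2 : ℝ), ← Real.sqrt_eq_rpow] at hrpow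
    simp only [Real.rpow_natCast, Real.rpow_two] at hrpow
    convert hrpow using 1
    · refine setIntegral_congr_fun measurableSet_Ioi fun y _ => ?_
      ring_nf
    · push_cast
      ring_nf
  calc ∫ x, x ^ (2 * k) ∂gaussianReal 0 1
      = ∫ x, |x| ^ (2 * k) ∂gaussianReal 0 1 := by
        simp only [(even_two_mul k).pow_abs]
    _ = 2 * (√(2 * π))⁻¹ * (2 ^ k * (√2 * (2⁻¹ * Real.Gamma (k + 1 / 2)))) := by
        rw [integral_comp_abs_gaussianReal (fun y => y ^ (2 * k)), hGamma]
    _ = (Nat.doubleFactorial (2 * k - 1) : ℝ) := by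
        rw [Real.Gamma_nat_add_half, Real.sqrt_mul zero_le_two]
        field_simp

lemma integrable_abs_pow_gaussianReal (n : ℕ) :
    Integrable (fun x : ℝ => |x| ^ n) (gaussianReal 0 1) :=
  (memLp_id_gaussianReal (n : ℝ≥0)).integrable_norm_pow'

lemma hasDerivAt_neg_two_mul_pow_mul_exp (n : ℕ) (y : ℝ) :
    HasDerivAt (fun y => -2 * (y ^ n * Real.exp (-y ^ 2 / 2)))
      (2 * (y ^ (n + 1) - n * y ^ (n - 1)) * Real.exp (-y ^ 2 / 2)) y := by
  have hexp : HasDerivAt (fun y : ℝ => Real.exp (-y ^ 2 / 2))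
      (Real.exp (-y ^ 2 / 2) * (-(2 * y) / 2)) y := by
    simpa using ((hasDerivAt_pow 2 y).neg.div_const 2).exp
  exact (((hasDerivAt_pow n y).mul hexp).const_mul (-2)).congr_deriv (by ring)

lemma tendsto_pow_mul_exp_neg_sq_div_two (n : ℕ) :
    Tendsto (fun y : ℝ => y ^ n * Real.exp (-y ^ 2 / 2)) atTop (𝓝 0) := by
  refine ((tendsto_rpow_abs_mul_exp_neg_mul_sq_cocompact (half_pos one_pos) n).mono_left
    atTop_le_cocompact).congr' ?_
  filter_upwards [eventually_ge_atTop 0] with y hy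
  rw [abs_of_nonneg hy, Real.rpow_natCast]
  ring_nf

/- The primitive `-2 yⁿ e^{-y²/2}` has derivative at least `yⁿ⁺¹ e^{-y²/2}` once `2n ≤ y²`. -/
lemma integral_Ioi_pow_mul_exp_le {n : ℕ} {a : ℝ} (ha : 0 < a) (hna : 2 * (n : ℝ) ≤ a ^ 2) :
    ∫ y in Ioi a, y ^ (n + 1) * Real.exp (-y ^ 2 / 2) ≤ 2 * (a ^ n * Real.exp (-a ^ 2 / 2)) := by
  set F' : ℝ → ℝ := fun y => 2 * (y ^ (n + 1) - n * y ^ (n - 1)) * Real.exp (-y ^ 2 / 2) with hF'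
  have hle (y : ℝ) (hy : y ∈ Ioi a) : y ^ (n + 1) * Real.exp (-y ^ 2 / 2) ≤ F' y := by
    have hy0 : 0 < y := ha.trans hy
    have hny : 2 * (n : ℝ) ≤ y ^ 2 := hna.trans (by gcongr; exact (le_of_lt hy))
    have hpow : 2 * (n * y ^ (n - 1)) ≤ y ^ (n + 1) := by
      rcases n with _ | m
      · simpa using hy0.le
      · calc 2 * ((m + 1 : ℕ) * y ^ m) = 2 * ((m + 1 : ℕ) : ℝ) * y ^ m := by ring
          _ ≤ y ^ 2 * y ^ m := by gcongr
          _ = y ^ (m + 1 + 1) := by ring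
    exact mul_le_mul_of_nonneg_right (by linarith) (Real.exp_pos _).le
  have hnonneg (y : ℝ) (hy : y ∈ Ioi a) : 0 ≤ y ^ (n + 1) * Real.exp (-y ^ 2 / 2) := by
    have : 0 < y := ha.trans hy
    positivity
  have hF'0 (y : ℝ) (hy : y ∈ Ioi a) : 0 ≤ F' y := (hnonneg y hy).trans (hle y hy)
  have hderiv (y : ℝ) (_ : y ∈ Ici a) := hasDerivAt_neg_two_mul_pow_mul_exp n y
  have hlim : Tendsto (fun y : ℝ => -2 * (y ^ n * Real.exp (-y ^ 2 / 2))) atTop (𝓝 0) := by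
    simpa using (tendsto_pow_mul_exp_neg_sq_div_two n).const_mul (-2)
  calc ∫ y in Ioi a, y ^ (n + 1) * Real.exp (-y ^ 2 / 2) ≤ ∫ y in Ioi a, F' y :=
        integral_mono_of_nonneg (ae_restrict_of_forall_mem measurableSet_Ioi hnonneg)
          (integrableOn_Ioi_deriv_of_nonneg' hderiv hF'0 hlim)
          (ae_restrict_of_forall_mem measurableSet_Ioi hle)
    _ = 2 * (a ^ n * Real.exp (-a ^ 2 / 2)) := by
        rw [integral_Ioi_of_hasDerivAt_of_nonneg' hderiv hF'0 hlim]
        ring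

lemma setIntegral_abs_pow_lt_abs_gaussianReal_le {n : ℕ} {a : ℝ} (ha : 0 < a)
    (hna : 2 * (n : ℝ) ≤ a ^ 2) :
    ∫ x in {x | a < |x|}, |x| ^ (n + 1) ∂gaussianReal 0 1 ≤
      4 * (a ^ n * Real.exp (-a ^ 2 / 2)) := by
  have hms : MeasurableSet {x : ℝ | a < |x|} := measurableSet_lt measurable_const measurable_norm
  have hind : ∫ x in {x | a < |x|}, |x| ^ (n + 1) ∂gaussianReal 0 1 =
      ∫ x, (Ioi a).indicator (fun y => y ^ (n + 1)) |x| ∂gaussianReal 0 1 := by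
    rw [← integral_indicator hms]
    rfl
  have hIoi : ∫ y in Ioi 0, (Ioi a).indicator (fun y => y ^ (n + 1)) y * Real.exp (-y ^ 2 / 2) =
      ∫ y in Ioi a, y ^ (n + 1) * Real.exp (-y ^ 2 / 2) := by
    simp only [← indicator_mul_left _ _ (fun y : ℝ => Real.exp (-y ^ 2 / 2))]
    rw [setIntegral_indicator measurableSet_Ioi, inter_eq_right.2 (Ioi_subset_Ioi ha.le)]
  have hpi : (√(2 * π))⁻¹ ≤ 1 :=
    inv_le_one_of_one_le₀ (Real.one_le_sqrt.2 (by linarith [Real.pi_gt_three]))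
  have hnonneg : 0 ≤ ∫ y in Ioi a, y ^ (n + 1) * Real.exp (-y ^ 2 / 2) :=
    setIntegral_nonneg measurableSet_Ioi fun y hy => by
      have : 0 < y := ha.trans hy
      positivity
  rw [hind, integral_comp_abs_gaussianReal, hIoi]
  calc 2 * (√(2 * π))⁻¹ * ∫ y in Ioi a, y ^ (n + 1) * Real.exp (-y ^ 2 / 2)
      ≤ 2 * 1 * (2 * (a ^ n * Real.exp (-a ^ 2 / 2))) := by
        gcongr
        exact integral_Ioi_pow_mul_exp_le ha hna
    _ = 4 * (a ^ n * Real.exp (-a ^ 2 / 2)) := by ring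

lemma lt_abs_mul_add_cases {σ L w x : ℝ} (hσ : 0 < σ) (h : L < |σ * w + x|) :
    L / 2 < |x| ∨ (L⁻¹ < |x| ∧ L / (2 * σ) < |w|) ∨ (L - L⁻¹) / σ < |w| := by
  have htri : L < σ * |w| + |x| := by
    refine h.trans_le ((abs_add_le _ _).trans ?_)
    rw [abs_mul, abs_of_pos hσ]
  rw [div_lt_iff₀ (by positivity : 0 < 2 * σ), div_lt_iff₀ hσ]
  by_contra! hcon
  obtain ⟨hx, hmid, hw⟩ := hcon
  rcases lt_or_ge L⁻¹ |x| with hLx | hLx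
  · linarith [hmid hLx]
  · linarith

lemma measureReal_lt_abs_le_of_norm_one_sub_charFun_le {μ : Measure ℝ} [IsProbabilityMeasure μ]
    {r A : ℝ} (hr : 0 < r) (hA : ∀ t, |t| ≤ 2 / r → ‖1 - charFun μ t‖ ≤ A) :
    μ.real {x | r < |x|} ≤ 2 * A := by
  have hint : ‖∫ t in (-2 * r⁻¹)..(2 * r⁻¹), 1 - charFun μ t‖ ≤
      A * |2 * r⁻¹ - -2 * r⁻¹| := by
    refine intervalIntegral.norm_integral_le_of_norm_le_const fun t ht => hA t ?_
    rw [neg_mul, uIoc_of_le (by linarith [inv_pos.2 hr]), ← div_eq_mul_inv] at ht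
    exact abs_le.2 ⟨ht.1.le, ht.2⟩
  have hlen : |2 * r⁻¹ - -2 * r⁻¹| = 4 * r⁻¹ := by
    rw [abs_of_pos] <;> linarith [inv_pos.2 hr]
  rw [hlen] at hint
  calc μ.real {x | r < |x|} ≤ 2⁻¹ * r * ‖∫ t in (-2 * r⁻¹)..(2 * r⁻¹), 1 - charFun μ t‖ :=
        measureReal_abs_gt_le_integral_charFun hr
    _ ≤ 2⁻¹ * r * (A * (4 * r⁻¹)) := by gcongr
    _ = 2 * A := by
        field_simp
        ring

lemma norm_one_sub_charFun_le_of_eq_exp {μ : Measure ℝ} [IsProbabilityMeasure μ] {t : ℝ} {z : ℂ}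
    (h : charFun μ t = Complex.exp z) : ‖1 - charFun μ t‖ ≤ 2 * ‖z‖ := by
  rcases le_total ‖z‖ 1 with hz | hz
  · rw [h, norm_sub_rev]
    exact Complex.norm_exp_sub_one_le hz
  · exact norm_one_sub_charFun_le_two.trans (by linarith)

lemma measureReal_lt_abs_le_of_charFun_eq_exp {μ : Measure ℝ} [IsProbabilityMeasure μ] {ψ : ℝ → ℂ}
    {C Y h r : ℝ} (hY : 0 ≤ Y) (hC : ∀ u, ‖ψ u‖ ≤ C * max 1 |u| ^ Y) (hh : 0 ≤ h)
    (hμ : ∀ t, charFun μ t = Complex.exp (h * ψ t)) (hr : 0 < r) (hr2 : r ≤ 2) :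
    μ.real {x | r < |x|} ≤ 4 * C * 2 ^ Y * h * r ^ (-Y) := by
  have hC0 : 0 ≤ C := by
    simpa using (norm_nonneg _).trans (hC 0)
  calc μ.real {x | r < |x|} ≤ 2 * (2 * (h * (C * (2 / r) ^ Y))) := by
        refine measureReal_lt_abs_le_of_norm_one_sub_charFun_le hr fun t ht => ?_
        refine (norm_one_sub_charFun_le_of_eq_exp (hμ t)).trans ?_
        have hmax : max 1 |t| ≤ 2 / r := max_le ((one_le_div hr).2 hr2) ht
        rw [norm_mul, Complex.norm_of_nonneg hh]
        gcongr
        exact (hC t).trans (by gcongr)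
    _ = 4 * C * 2 ^ Y * h * r ^ (-Y) := by
        rw [Real.div_rpow zero_le_two hr.le, Real.rpow_neg hr.le]
        ring

lemma div_pow_mul_exp_le {σ L : ℝ} (hσ : 0 < σ) (hL : 1 ≤ L) (n : ℕ) :
    ((L - L⁻¹) / σ) ^ n * Real.exp (-((L - L⁻¹) / σ) ^ 2 / 2) ≤
      (σ ^ n)⁻¹ * Real.exp (σ ^ 2)⁻¹ * (L ^ n * Real.exp (-L ^ 2 / (2 * σ ^ 2))) := by
  have hL0 : 0 < L := one_pos.trans_le hL
  have hinv : 0 < L⁻¹ := inv_pos.2 hL0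
  have hsub : 0 ≤ L - L⁻¹ := sub_nonneg.2 ((inv_le_one_of_one_le₀ hL).trans hL)
  have hexponent :
      -((L - L⁻¹) / σ) ^ 2 / 2 = (σ ^ 2)⁻¹ + -L ^ 2 / (2 * σ ^ 2) - (L⁻¹ / σ) ^ 2 / 2 := by
    field_simp
    ring
  calc ((L - L⁻¹) / σ) ^ n * Real.exp (-((L - L⁻¹) / σ) ^ 2 / 2)
      ≤ (L / σ) ^ n * Real.exp ((σ ^ 2)⁻¹ + -L ^ 2 / (2 * σ ^ 2)) := by
        gcongr
        · linarith
        · rw [hexponent]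
          exact sub_le_self _ (by positivity)
    _ = (σ ^ n)⁻¹ * Real.exp (σ ^ 2)⁻¹ * (L ^ n * Real.exp (-L ^ 2 / (2 * σ ^ 2))) := by
        rw [Real.exp_add, div_pow]
        ring

lemma eventually_setIntegral_abs_pow_lt_abs_gaussianReal_le {σ : ℝ} (hσ : 0 < σ) (n : ℕ) :
    ∀ᶠ L : ℝ in atTop, ∫ w in {w | (L - L⁻¹) / σ < |w|}, |w| ^ (n + 1) ∂gaussianReal 0 1 ≤
      4 * ((σ ^ n)⁻¹ * Real.exp (σ ^ 2)⁻¹) * (L ^ n * Real.exp (-L ^ 2 / (2 * σ ^ 2))) := by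
  have hatTop : Tendsto (fun L : ℝ => ((L - L⁻¹) / σ) ^ 2) atTop atTop :=
    (tendsto_pow_atTop two_ne_zero).comp
      ((tendsto_id.atTop_add tendsto_inv_atTop_zero.neg).atTop_div_const hσ)
  filter_upwards [eventually_gt_atTop 1, hatTop.eventually_ge_atTop (2 * (n : ℝ))] with L hL hLn
  have ha : 0 < (L - L⁻¹) / σ := div_pos (sub_pos.2 ((inv_lt_one_of_one_lt₀ hL).trans hL)) hσ
  refine (setIntegral_abs_pow_lt_abs_gaussianReal_le ha hLn).trans ?_
  rw [mul_assoc 4]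
  exact mul_le_mul_of_nonneg_left (div_pow_mul_exp_le hσ hL.le n) zero_le_four

lemma inv_rpow_neg_mul_inv_pow_le {L Y : ℝ} {p : ℕ} (hL : 1 ≤ L) (hp : 2 * Y ≤ p) :
    L⁻¹ ^ (-Y) * (L ^ p)⁻¹ ≤ L ^ (-Y) := by
  have hL0 : 0 < L := one_pos.trans_le hL
  calc L⁻¹ ^ (-Y) * (L ^ p)⁻¹ = L ^ (Y - p) := by
        rw [Real.inv_rpow hL0.le, Real.rpow_neg hL0.le, inv_inv, Real.rpow_sub hL0,
          Real.rpow_natCast, div_eq_mul_inv]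
    _ ≤ L ^ (-Y) := Real.rpow_le_rpow_of_exponent_le hL (by linarith)

section IndependentSum

variable {Ω : Type*} [MeasurableSpace Ω] {P : Measure Ω} {W X : Ω → ℝ} {σ L : ℝ}

lemma setIntegral_abs_pow_lt_abs_mul_add_le (hWX : IndepFun W X P) (hW : Measurable W)
    (hX : Measurable X) (hσ : 0 < σ) (hL : 0 < L) (n p : ℕ)
    (hn : Integrable (fun w => |w| ^ n) (P.map W))
    (hnp : Integrable (fun w => |w| ^ (n + p)) (P.map W)) :
    ∫ ω in {ω | L < |σ * W ω + X ω|}, |W ω| ^ n ∂P ≤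
      P.real {ω | L / 2 < |X ω|} * ∫ w, |w| ^ n ∂P.map W +
      (P.real {ω | L⁻¹ < |X ω|} * (((L / (2 * σ)) ^ p)⁻¹ * ∫ w, |w| ^ (n + p) ∂P.map W) +
      ∫ w in {w | (L - L⁻¹) / σ < |w|}, |w| ^ n ∂P.map W) := by
  have hms (c : ℝ) : MeasurableSet {x : ℝ | c < |x|} :=
    measurableSet_lt measurable_const measurable_norm
  have hint : Integrable (fun ω => |W ω| ^ n) P := hn.comp_measurable hW
  have hint0 : 0 ≤ fun ω => |W ω| ^ n := fun ω => by positivity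
  have hsub : {ω | L < |σ * W ω + X ω|} ⊆ {ω | L / 2 < |X ω|} ∪
      ({ω | L⁻¹ < |X ω| ∧ L / (2 * σ) < |W ω|} ∪ {ω | (L - L⁻¹) / σ < |W ω|}) :=
    fun ω hω => lt_abs_mul_add_cases hσ hω
  refine (setIntegral_le_add_of_subset_union hint hint0 hsub).trans (add_le_add ?_
    ((setIntegral_le_add_of_subset_union hint hint0 Subset.rfl).trans (add_le_add ?_ ?_)))
  · simpa using (setIntegral_preimage_inter_of_indepFun hWX hW hX (hms (L / 2)) .univ hn.1).le
  · refine (setIntegral_preimage_inter_of_indepFun hWX hW hX (hms L⁻¹) (hms (L / (2 * σ)))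
      hn.1).le.trans ?_
    exact mul_le_mul_of_nonneg_left (setIntegral_abs_pow_lt_abs_le (by positivity) n p hnp)
      measureReal_nonneg
  · exact (setIntegral_map (hms _) hn.1 hW.aemeasurable).ge

lemma eventually_forall_setIntegral_abs_pow_lt_abs_mul_add_le (hW : Measurable W)
    (hW_map : P.map W = gaussianReal 0 1) (hσ : 0 < σ) (Y : ℝ) (n : ℕ) :
    ∃ K, 0 ≤ K ∧ ∀ᶠ L in atTop, ∀ (X : Ω → ℝ) (δ : ℝ), Measurable X → IndepFun W X P →
      P.real {ω | L⁻¹ < |X ω|} ≤ δ * L⁻¹ ^ (-Y) → P.real {ω | L / 2 < |X ω|} ≤ δ * (L / 2) ^ (-Y) →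
      ∫ ω in {ω | L < |σ * W ω + X ω|}, |W ω| ^ (n + 1) ∂P ≤
        K * (δ * L ^ (-Y) + L ^ n * Real.exp (-L ^ 2 / (2 * σ ^ 2))) := by
  obtain ⟨p, hp⟩ := exists_nat_ge (2 * Y)
  set M := ∫ w, |w| ^ (n + 1) ∂gaussianReal 0 1 with hM
  set N := ∫ w, |w| ^ (n + 1 + p) ∂gaussianReal 0 1 with hN
  set G := 4 * ((σ ^ n)⁻¹ * Real.exp (σ ^ 2)⁻¹)
  have hM0 : 0 ≤ M := integral_nonneg fun w => by positivity
  have : 0 ≤ N := integral_nonneg fun w => by positivity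
  have hG0 : 0 ≤ G := by positivity
  have hK0 : 0 ≤ 2 ^ Y * M + (2 * σ) ^ p * N := by positivity
  refine ⟨2 ^ Y * M + (2 * σ) ^ p * N + G, by positivity, ?_⟩
  filter_upwards [eventually_gt_atTop 1, eventually_setIntegral_abs_pow_lt_abs_gaussianReal_le hσ n]
    with L hL hgauss X δ hX hWX hsmall hlarge
  have hL0 : 0 < L := one_pos.trans hL
  have hδ : 0 ≤ δ := nonneg_of_mul_nonneg_left (measureReal_nonneg.trans hsmall) (by positivity)
  have hfar : P.real {ω | L / 2 < |X ω|} * M ≤ 2 ^ Y * M * (δ * L ^ (-Y)) := by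
    refine (mul_le_mul_of_nonneg_right hlarge hM0).trans_eq ?_
    rw [Real.div_rpow hL0.le zero_le_two, Real.rpow_neg zero_le_two]
    field_simp
  have hmid : P.real {ω | L⁻¹ < |X ω|} * (((L / (2 * σ)) ^ p)⁻¹ * N) ≤
      (2 * σ) ^ p * N * (δ * L ^ (-Y)) :=
    calc P.real {ω | L⁻¹ < |X ω|} * (((L / (2 * σ)) ^ p)⁻¹ * N)
        ≤ δ * L⁻¹ ^ (-Y) * (((L / (2 * σ)) ^ p)⁻¹ * N) := by gcongr
      _ = (2 * σ) ^ p * N * (δ * (L⁻¹ ^ (-Y) * (L ^ p)⁻¹)) := by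
          rw [div_pow, inv_div]
          ring
      _ ≤ (2 * σ) ^ p * N * (δ * L ^ (-Y)) := by
          gcongr
          exact inv_rpow_neg_mul_inv_pow_le hL.le hp
  have hsplit := setIntegral_abs_pow_lt_abs_mul_add_le hWX hW hX hσ hL0 (n + 1) p
    (hW_map ▸ integrable_abs_pow_gaussianReal _) (hW_map ▸ integrable_abs_pow_gaussianReal _)
  rw [hW_map, ← hM, ← hN] at hsplit
  set A := δ * L ^ (-Y)
  set B := L ^ n * Real.exp (-L ^ 2 / (2 * σ ^ 2))
  calc ∫ ω in {ω | L < |σ * W ω + X ω|}, |W ω| ^ (n + 1) ∂P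
      ≤ 2 ^ Y * M * A + ((2 * σ) ^ p * N * A + G * B) :=
        hsplit.trans (add_le_add hfar (add_le_add hmid hgauss))
    _ = (2 ^ Y * M + (2 * σ) ^ p * N) * A + G * B := by ring
    _ ≤ (2 ^ Y * M + (2 * σ) ^ p * N + G) * (A + B) := by
        have hA : 0 ≤ A := by positivity
        have hB : 0 ≤ B := by positivity
        linarith [mul_nonneg hG0 hA, mul_nonneg hK0 hB]

lemma setIntegral_mul_pow_lt_abs_mul_add {s : ℝ} (hs : 0 < s) (σ ε : ℝ) (n : ℕ) :
    ∫ ω in {ω | ε < |σ * s * W ω + X ω|}, (s * W ω) ^ n ∂P =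
      s ^ n * ∫ ω in {ω | ε / s < |σ * W ω + s⁻¹ * X ω|}, W ω ^ n ∂P := by
  have hset : {ω | ε < |σ * s * W ω + X ω|} = {ω | ε / s < |σ * W ω + s⁻¹ * X ω|} := by
    ext ω
    have hscale : σ * s * W ω + X ω = s * (σ * W ω + s⁻¹ * X ω) := by
      field_simp
    rw [mem_ofPred_eq, mem_ofPred_eq, hscale, abs_mul, abs_of_pos hs, div_lt_iff₀' hs]
  rw [hset, ← integral_const_mul]
  simp only [mul_pow]

end IndependentSum

section SmallTime

variable {Ω : Type*} [MeasurableSpace Ω] {P : Measure Ω} {W X : Ω → ℝ} {J : ℝ → Ω → ℝ}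
  {Y D σ h r : ℝ} {k : ℕ} {ε : ℝ → ℝ}

lemma measureReal_lt_abs_le_of_integral_exp_eq [IsProbabilityMeasure P] {ψ : ℝ → ℂ} {C : ℝ}
    (hY : 0 ≤ Y) (hC : ∀ u, ‖ψ u‖ ≤ C * max 1 |u| ^ Y) (hh : 0 ≤ h) (hX : Measurable X)
    (hcf : ∀ u : ℝ, ∫ ω, Complex.exp (Complex.I * u * X ω) ∂P = Complex.exp (h * ψ u))
    (hr : 0 < r) (hr2 : r ≤ 2) :
    P.real {ω | r < |X ω|} ≤ 4 * C * 2 ^ Y * h * r ^ (-Y) := by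
  have := Measure.isProbabilityMeasure_map (μ := P) hX.aemeasurable
  have hchar (t : ℝ) : charFun (P.map X) t = Complex.exp (h * ψ t) := by
    rw [charFun_apply_real, integral_map hX.aemeasurable (by fun_prop), ← hcf t]
    simp only [mul_comm, mul_left_comm]
  have hms : MeasurableSet {x : ℝ | r < |x|} := measurableSet_lt measurable_const measurable_norm
  calc P.real {ω | r < |X ω|} = (P.map X).real {x | r < |x|} := (map_measureReal_apply hX hms).symm
    _ ≤ 4 * C * 2 ^ Y * h * r ^ (-Y) :=
      measureReal_lt_abs_le_of_charFun_eq_exp hY hC hh hchar hr hr2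

lemma measureReal_lt_abs_inv_mul_le {s : ℝ} (hs : 0 < s)
    (htail : ∀ r, 0 < r → r ≤ 1 → P.real {ω | r < |X ω|} ≤ D * r ^ (-Y)) (hr : 0 < r)
    (hsr : s * r ≤ 1) :
    P.real {ω | r < |s⁻¹ * X ω|} ≤ D * s ^ (-Y) * r ^ (-Y) := by
  have hset : {ω | r < |s⁻¹ * X ω|} = {ω | s * r < |X ω|} := by
    ext ω
    rw [mem_ofPred_eq, mem_ofPred_eq, abs_mul, abs_of_pos (inv_pos.2 hs), lt_inv_mul_iff₀ hs]
  rw [hset, mul_assoc, ← Real.mul_rpow hs.le hr.le]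
  exact htail _ (by positivity) hsr

lemma integrable_mul_pow_of_map_eq_gaussianReal (hW : Measurable W)
    (hW_map : P.map W = gaussianReal 0 1) (s : ℝ) (n : ℕ) :
    Integrable (fun ω => (s * W ω) ^ n) P := by
  have hpow : Integrable (fun w : ℝ => w ^ n) (P.map W) := by
    rw [hW_map, ← integrable_norm_iff (by fun_prop)]
    simpa only [norm_pow, Real.norm_eq_abs] using integrable_abs_pow_gaussianReal n
  simpa only [mul_pow, Function.comp_def] using (hpow.comp_measurable hW).const_mul (s ^ n)

lemma integral_sqrt_mul_pow_two_mul_of_map_eq_gaussianReal (hW : Measurable W)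
    (hW_map : P.map W = gaussianReal 0 1) (hh : 0 ≤ h) (k : ℕ) :
    ∫ ω, (√h * W ω) ^ (2 * k) ∂P = (Nat.doubleFactorial (2 * k - 1) : ℝ) * h ^ k := by
  simp only [mul_pow]
  rw [integral_const_mul, ← integral_pow_two_mul_gaussianReal, ← hW_map,
    integral_map hW.aemeasurable (by fun_prop), pow_mul, Real.sq_sqrt hh, mul_comm]

lemma integral_mul_indicator_abs_le_eq_sub {f : Ω → ℝ} (hf : Integrable f P) (hX : Measurable X)
    (c : ℝ) :
    ∫ ω, f ω * {x : ℝ | |x| ≤ c}.indicator (fun _ => (1 : ℝ)) (X ω) ∂P =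
      ∫ ω, f ω ∂P - ∫ ω in {ω | c < |X ω|}, f ω ∂P := by
  have hms : MeasurableSet {ω | c < |X ω|} := measurableSet_lt measurable_const hX.norm
  have hcompl : {ω | c < |X ω|}ᶜ = {ω | |X ω| ≤ c} := by
    ext ω
    exact not_lt (a := c)
  rw [← integral_add_compl hms hf, add_sub_cancel_left, ← integral_indicator hms.compl, hcompl]
  refine integral_congr_ae (Eventually.of_forall fun ω => ?_)
  by_cases hω : |X ω| ≤ c <;> simp [indicator, hω]

lemma pow_mul_rpow_add_pow_mul_exp_div_sqrt_eq {e : ℝ} (hh : 0 < h) (he : 0 < e)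
    (hk : 1 ≤ k) (Y D σ : ℝ) :
    h ^ k * (D * h * √h ^ (-Y) * (e / √h) ^ (-Y) +
      (e / √h) ^ (2 * k - 1) * Real.exp (-(e / √h) ^ 2 / (2 * σ ^ 2))) =
    D * (h ^ (k + 1) * e ^ (-Y)) +
      √h * e ^ (2 * k - 1) * Real.exp (-(e ^ 2) / (2 * σ ^ 2 * h)) := by
  have hs : 0 < √h := Real.sqrt_pos.2 hh
  have hsq : √h ^ 2 = h := Real.sq_sqrt hh.le
  have hrpow : √h ^ (-Y) * (e / √h) ^ (-Y) = e ^ (-Y) := by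
    rw [← Real.mul_rpow hs.le (by positivity), mul_div_cancel₀ _ hs.ne']
  have hpow : h ^ k * (e / √h) ^ (2 * k - 1) = √h * e ^ (2 * k - 1) := by
    have hhk : h ^ k = √h * √h ^ (2 * k - 1) := by
      rw [mul_pow_sub_one (by lia), pow_mul, hsq]
    rw [hhk, mul_assoc, ← mul_pow, mul_div_cancel₀ _ hs.ne']
  have hexponent : -(e / √h) ^ 2 / (2 * σ ^ 2) = -(e ^ 2) / (2 * σ ^ 2 * h) := by
    rw [div_pow, hsq, ← neg_div, div_div, mul_comm h]
  rw [hexponent, mul_add, ← mul_assoc _ _ (Real.exp _), hpow, ← hrpow]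
  ring

lemma isBigO_setIntegral_pow_lt_abs_mul_add (hW : Measurable W)
    (hW_map : P.map W = gaussianReal 0 1) (hJ : ∀ h, Measurable (J h))
    (hWJ : ∀ h, 0 < h → IndepFun W (J h) P) (hσ : 0 < σ)
    (htail : ∀ h, 0 < h → ∀ r, 0 < r → r ≤ 1 → P.real {ω | r < |J h ω|} ≤ D * h * r ^ (-Y))
    (hk : 1 ≤ k) (hε : Tendsto ε (𝓝[>] 0) (𝓝 0))
    (hε_sqrt : Tendsto (fun h => ε h / √h) (𝓝[>] 0) atTop) :
    (fun h => ∫ ω in {ω | ε h < |σ * √h * W ω + J h ω|}, (√h * W ω) ^ (2 * k) ∂P) =O[𝓝[>] 0]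
      fun h => D * (h ^ (k + 1) * ε h ^ (-Y)) +
        √h * ε h ^ (2 * k - 1) * Real.exp (-(ε h ^ 2) / (2 * σ ^ 2 * h)) := by
  obtain ⟨K, hK, hbound⟩ :=
    eventually_forall_setIntegral_abs_pow_lt_abs_mul_add_le hW hW_map hσ Y (2 * k - 1)
  refine IsBigO.of_bound K ?_
  filter_upwards [hε_sqrt.eventually hbound, hε_sqrt.eventually_ge_atTop 1,
    hε.eventually_le_const one_pos, self_mem_nhdsWithin] with h hbound hL hε1 hh
  replace hh : 0 < h := hh
  have hs : 0 < √h := Real.sqrt_pos.2 hh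
  set L := ε h / √h with hLdef
  have hL0 : 0 < L := one_pos.trans_le hL
  have hsL : √h * L = ε h := mul_div_cancel₀ _ hs.ne'
  have hε0 : 0 < ε h := hsL ▸ mul_pos hs hL0
  have hs1 : √h ≤ 1 := (le_mul_of_one_le_right hs.le hL).trans (hsL.le.trans hε1)
  have hscaled := hbound (fun ω => (√h)⁻¹ * J h ω) (D * h * √h ^ (-Y)) ((hJ h).const_mul _)
    ((hWJ h hh).comp measurable_id (measurable_const_mul _))
    (measureReal_lt_abs_inv_mul_le hs (htail h hh) (inv_pos.2 hL0)
      (mul_le_one₀ hs1 (by positivity) (inv_le_one_of_one_le₀ hL)))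
    (measureReal_lt_abs_inv_mul_le hs (htail h hh) (half_pos hL0) (by linarith))
  rw [Nat.sub_add_cancel (by lia)] at hscaled
  simp only [(even_two_mul k).pow_abs] at hscaled
  rw [Real.norm_of_nonneg (integral_nonneg fun ω => (even_two_mul k).pow_nonneg _),
    setIntegral_mul_pow_lt_abs_mul_add hs, pow_mul, Real.sq_sqrt hh.le,
    ← pow_mul_rpow_add_pow_mul_exp_div_sqrt_eq hh hε0 hk, ← hLdef]
  calc h ^ k * ∫ ω in {ω | L < |σ * W ω + (√h)⁻¹ * J h ω|}, W ω ^ (2 * k) ∂P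
      ≤ h ^ k * (K * (D * h * √h ^ (-Y) * L ^ (-Y) +
          L ^ (2 * k - 1) * Real.exp (-L ^ 2 / (2 * σ ^ 2)))) := by gcongr
    _ = K * (h ^ k * (D * h * √h ^ (-Y) * L ^ (-Y) +
          L ^ (2 * k - 1) * Real.exp (-L ^ 2 / (2 * σ ^ 2)))) := by ring
    _ ≤ _ := by
        gcongr
        exact Real.le_norm_self _

lemma isBigO_pow_succ_mul_rpow_neg (hk : 1 ≤ k)
    (hε_sqrt : Tendsto (fun h => ε h / √h) (𝓝[>] 0) atTop) (Y : ℝ) :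
    (fun h => h ^ (k + 1) * ε h ^ (-Y)) =O[𝓝[>] 0]
      fun h => h ^ 2 * ε h ^ (2 * (k : ℝ) - Y - 2) := by
  obtain ⟨m, rfl⟩ := Nat.exists_eq_add_of_le' hk
  refine IsBigO.of_bound 1 ?_
  filter_upwards [hε_sqrt.eventually_ge_atTop 1, self_mem_nhdsWithin] with h hL hh
  replace hh : 0 < h := hh
  have hle : √h ≤ ε h := (one_le_div (Real.sqrt_pos.2 hh)).1 hL
  have hε0 : 0 < ε h := (Real.sqrt_pos.2 hh).trans_le hle
  have hexponent : 2 * ((m + 1 : ℕ) : ℝ) - Y - 2 = ((2 * m : ℕ) : ℝ) + -Y := by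
    push_cast
    ring
  rw [one_mul, Real.norm_of_nonneg (by positivity), Real.norm_of_nonneg (by positivity), hexponent,
    Real.rpow_add hε0, Real.rpow_natCast, pow_mul]
  calc h ^ (m + 1 + 1) * ε h ^ (-Y) = h ^ 2 * (h ^ m * ε h ^ (-Y)) := by ring
    _ ≤ h ^ 2 * ((ε h ^ 2) ^ m * ε h ^ (-Y)) := by
        gcongr
        exact (Real.sqrt_le_left hε0.le).1 hle

lemma exists_isBigO_integral_pow_mul_indicator_of_tail (hW : Measurable W)
    (hW_map : P.map W = gaussianReal 0 1) (hJ : ∀ h, Measurable (J h))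
    (hWJ : ∀ h, 0 < h → IndepFun W (J h) P) (hσ : 0 < σ)
    (htail : ∀ h, 0 < h → ∀ r, 0 < r → r ≤ 1 → P.real {ω | r < |J h ω|} ≤ D * h * r ^ (-Y))
    (hk : 1 ≤ k) (hε : Tendsto ε (𝓝[>] 0) (𝓝 0))
    (hε_sqrt : Tendsto (fun h => ε h / √h) (𝓝[>] 0) atTop) :
    ∃ R₁ R₂ : ℝ → ℝ,
      (∀ h, 0 < h →
        ∫ ω, (√h * W ω) ^ (2 * k) *
            {x : ℝ | |x| ≤ ε h}.indicator (fun _ => (1 : ℝ)) (σ * √h * W ω + J h ω) ∂P =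
          (Nat.doubleFactorial (2 * k - 1) : ℝ) * h ^ k + R₁ h + R₂ h) ∧
      R₁ =O[𝓝[>] 0] (fun h => h ^ (k + 1) * ε h ^ (-Y)) ∧
      R₂ =O[𝓝[>] 0]
        fun h => √h * ε h ^ (2 * k - 1) * Real.exp (-(ε h ^ 2) / (2 * σ ^ 2 * h)) := by
  obtain ⟨R₁, R₂, hR, hR₁, hR₂⟩ := exists_isBigO_isBigO_of_isBigO_add
    (isBigO_setIntegral_pow_lt_abs_mul_add hW hW_map hJ hWJ hσ htail hk hε hε_sqrt).neg_left
  refine ⟨R₁, R₂, fun h hh => ?_, hR₁.trans (isBigO_const_mul_self D _ _), hR₂⟩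
  have hsum : Measurable fun ω => σ * √h * W ω + J h ω := (hW.const_mul _).add (hJ h)
  rw [integral_mul_indicator_abs_le_eq_sub
      (integrable_mul_pow_of_map_eq_gaussianReal hW hW_map _ _) hsum,
    integral_sqrt_mul_pow_two_mul_of_map_eq_gaussianReal hW hW_map hh.le, sub_eq_add_neg, add_assoc]
  exact congrArg _ (congrFun hR h)

end SmallTime

theorem truncated_brownian_even_moments_general
    {Ω : Type*} [MeasurableSpace Ω] (P : Measure Ω) [IsProbabilityMeasure P]
    (Y Cp Cm σ b : ℝ) (q : ℝ → ℝ) (hY1 : 1 < Y) (hY2 : Y < 2)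
    (hCp : 0 ≤ Cp) (hCm : 0 ≤ Cm) (hσ : 0 < σ)
    (hq_meas : Measurable q) (hq_nonneg : ∀ x, 0 ≤ q x) (hq_bdd : ∃ M : ℝ, ∀ x, q x ≤ M)
    (J : ℝ → Ω → ℝ) (W : Ω → ℝ)
    (hWmeas : Measurable W) (hW : P.map W = gaussianReal 0 1) (hJmeas : ∀ h, Measurable (J h))
    (hJcf : ∀ h : ℝ, 0 < h → ∀ u : ℝ,
      ∫ ω, Complex.exp (Complex.I * u * J h ω) ∂P = Complex.exp (h * psiJ b Y Cp Cm q u))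
    (hindep : ∀ h, 0 < h → IndepFun W (J h) P) (k : ℕ) (hk : 1 ≤ k)
    (ε : ℝ → ℝ) (hε0 : Tendsto ε (𝓝[>] 0) (𝓝 0))
    (hεsqrt : Tendsto (fun h => ε h / √h) (𝓝[>] 0) atTop) :
    ∃ R₁ R₂ : ℝ → ℝ,
      (∀ h, 0 < h →
        ∫ ω, (√h * W ω) ^ (2 * k) *
            {x : ℝ | |x| ≤ ε h}.indicator (fun _ => (1 : ℝ)) (σ * √h * W ω + J h ω) ∂P =
          (Nat.doubleFactorial (2 * k - 1) : ℝ) * h ^ k + R₁ h + R₂ h) ∧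
      R₁ =O[𝓝[>] 0] (fun h => h ^ (k + 1) * ε h ^ (-Y)) ∧
      R₂ =O[𝓝[>] 0]
        fun h => √h * ε h ^ (2 * k - 1) * Real.exp (-(ε h ^ 2) / (2 * σ ^ 2 * h)) := by
  obtain ⟨M, hM⟩ := hq_bdd
  obtain ⟨C, hC⟩ := exists_norm_psiJ_le b hY1 hY2 hCp hCm hq_meas hq_nonneg hM
  have htail (h : ℝ) (hh : 0 < h) (r : ℝ) (hr : 0 < r) (hr1 : r ≤ 1) :
      P.real {ω | r < |J h ω|} ≤ 4 * C * 2 ^ Y * h * r ^ (-Y) :=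
    measureReal_lt_abs_le_of_integral_exp_eq (by linarith) hC hh.le (hJmeas h) (hJcf h hh) hr
      (by linarith)
  exact exists_isBigO_integral_pow_mul_indicator_of_tail hWmeas hW hJmeas hindep hσ htail hk hε0
    hεsqrt

/-- Lemma C.3: `E(W_h^{2k} 1_{|σW_h + J_h| ≤ ε}) = (2k−1)!! h^k +
O(h² ε^{2k−Y−2}) + o(h^{k+1/Y}) + O(h^{1/2} ε^{2k−1} e^{−ε²/(2σ²h)})`. -/
theorem truncated_brownian_even_moments
    {Ω : Type*} [MeasurableSpace Ω] (P : Measure Ω) [IsProbabilityMeasure P]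
    (Y Cp Cm σ b : ℝ) (q : ℝ → ℝ)
    (hY1 : 1 < Y) (hY2 : Y < 2)
    (hCp : 0 < Cp) (hCm : 0 < Cm) (hσ : 0 < σ)
    (hq_meas : Measurable q) (hq_nonneg : ∀ x, 0 ≤ q x)
    (hq_bdd : ∃ M : ℝ, ∀ x, q x ≤ M)
    (hq_lim : Tendsto q (𝓝[≠] (0 : ℝ)) (𝓝 1))
    (hq_taylor : ∃ αp αm : ℝ, αp ≠ 0 ∧ αm ≠ 0 ∧
      IntegrableOn (fun x => |q x - 1 - αp * x| * x ^ (-Y - 1)) (Set.Ioc (0 : ℝ) 1) ∧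
      IntegrableOn (fun x => |q x - 1 - αm * x| * |x| ^ (-Y - 1)) (Set.Ico (-1 : ℝ) 0))
    (hq_log : ∃ K M : ℝ, ∀ x : ℝ, M ≤ |x| → |Real.log (q x)| ≤ K * |x|)
    (hq_inf : ∀ ε : ℝ, 0 < ε → ∃ c : ℝ, 0 < c ∧ ∀ x : ℝ, x ≠ 0 → |x| < ε → c ≤ q x)
    (hq_sq : IntegrableOn (fun x => q x ^ 2 * |x| ^ (-1 - Y)) {x : ℝ | 1 < |x|})
    -- the jump part `J` and the Brownian part `W`
    (J : ℝ → Ω → ℝ) (W : Ω → ℝ)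
    (hWmeas : Measurable W) (hW : P.map W = gaussianReal 0 1)
    (hJmeas : ∀ h : ℝ, Measurable (J h))
    (hJcf : ∀ h : ℝ, 0 < h → ∀ u : ℝ,
      ∫ ω, Complex.exp (Complex.I * u * J h ω) ∂P = Complex.exp (h * psiJ b Y Cp Cm q u))
    (hindep : ∀ h : ℝ, 0 < h → IndepFun W (J h) P)
    (k : ℕ) (hk : 1 ≤ k)
    -- the threshold `ε = ε(h)`
    (ε : ℝ → ℝ) (hεpos : ∀ h : ℝ, 0 < h → 0 < ε h)
    (hε0 : Tendsto ε (𝓝[>] (0 : ℝ)) (𝓝 0))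
    (hεsqrt : Tendsto (fun h => ε h / Real.sqrt h) (𝓝[>] (0 : ℝ)) atTop) :
    ∃ R₁ R₂ R₃ : ℝ → ℝ,
      (∀ h : ℝ, 0 < h →
        (∫ ω, (Real.sqrt h * W ω) ^ (2 * k) *
            Set.indicator {x : ℝ | |x| ≤ ε h} (fun _ => (1 : ℝ))
              (σ * Real.sqrt h * W ω + J h ω) ∂P)
          = (Nat.doubleFactorial (2 * k - 1) : ℝ) * h ^ k + R₁ h + R₂ h + R₃ h) ∧
      R₁ =O[𝓝[>] (0 : ℝ)] (fun h => h ^ 2 * ε h ^ (2 * (k : ℝ) - Y - 2)) ∧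
      R₂ =o[𝓝[>] (0 : ℝ)] (fun h => h ^ ((k : ℝ) + 1 / Y)) ∧
      R₃ =O[𝓝[>] (0 : ℝ)]
        (fun h => Real.sqrt h * ε h ^ (2 * k - 1) * Real.exp (-(ε h ^ 2) / (2 * σ ^ 2 * h))) := by
  obtain ⟨R₁, R₂, hR, hR₁, hR₂⟩ := truncated_brownian_even_moments_general P Y Cp Cm σ b q hY1 hY2
    hCp.le hCm.le hσ hq_meas hq_nonneg hq_bdd J W hWmeas hW hJmeas hJcf hindep k hk ε hε0 hεsqrt
  exact ⟨R₁, 0, R₂, by simpa using hR, hR₁.trans (isBigO_pow_succ_mul_rpow_neg hk hεsqrt Y),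
    isLittleO_zero _ _, hR₂⟩

end
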